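/- Let G be a finite connected graph obtained by gluing three trees T_1, T_2, T_3 along a common vertex set V of size n ≥ 3 (the trees pairwise disjoint away from V). Then the divisor D assigning 1 to each vertex of V and 0 elsewhere has Baker–Norine rank at least 1. -/

import Mathlib

open Finset in
/-- The degree of a divisor (an integer-valued function on vertices). -/
def divDeg {V : Type*} [Fintype V] (D : V → ℤ) : ℤ := ∑ v, D v

open scoped Classical in
/-- The graph Laplacian applied to an integer-valued function on vertices. -/
noncomputable def graphLaplacian {V : Type*} [Fintype V] (G : SimpleGraph V)
    (f : V → ℤ) : V → ℤ :=
  fun v => ∑ w, if G.Adj v w then f v - f w else 0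

/-- Two divisors are linearly equivalent if they differ by a Laplacian. -/
def LinEquiv {V : Type*} [Fintype V] (G : SimpleGraph V) (D D' : V → ℤ) : Prop :=
  ∃ f : V → ℤ, D' = D + graphLaplacian G f

/-- A divisor is effective if it is nonnegative at every vertex. -/
def Effective {V : Type*} (D : V → ℤ) : Prop := ∀ v, 0 ≤ D v

/-- A divisor is winnable if it is linearly equivalent to an effective divisor. -/
def Winnable {V : Type*} [Fintype V] (G : SimpleGraph V) (D : V → ℤ) : Prop :=
  ∃ D', LinEquiv G D D' ∧ Effective D'

/-- The Baker–Norine rank of `D` is at least `r` if `D - E` is winnable for every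
effective divisor `E` of degree `r`. -/
def RankGe {V : Type*} [Fintype V] (G : SimpleGraph V) (D : V → ℤ) (r : ℕ) : Prop :=
  ∀ E : V → ℤ, Effective E → divDeg E = r → Winnable G (D - E)

/-!
The set `S` of common vertices is a strong separator: no vertex has two neighbours in a connected
set avoiding `S`, because such a set lies, with all the edges meeting it, in a single tree. To bring
a chip to `w ∉ S`, start with `K = S` and fire all vertices outside the component `C` of `w` in
`G - K`; in the present sign convention this adds the Laplacian of the indicator function of `C`.
Every vertex outside `C` loses at most one chip, and those losing one lie in `K` and have one to
spare. Afterwards every vertex of `C` adjacent to the complement of `C` carries a chip. If `w` still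
has none, replace `K` by the set of vertices that lie outside `C` or carry a chip, and repeat; `K`
grows strictly.
-/

section Connectivity

variable {V : Type*} {G : SimpleGraph V}

theorem connected_coeGraph {K : Set V} (C : G.ComponentCompl K) : C.coeGraph.Connected :=
  C.connected_toSimpleGraph.map
    (⟨fun x => ⟨x.1.1, x.1.2, x.2⟩, fun h => h⟩ : C.toSimpleGraph →g C.coeGraph)
    fun ⟨v, hv, hvC⟩ => ⟨⟨⟨v, hv⟩, hvC⟩, rfl⟩

theorem subsingleton_neighborSet_inter_of_isAcyclic (hG : G.IsAcyclic) {A : Set V}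
    (hA : (G.induce A).Preconnected) {v : V} (hv : v ∉ A) :
    (G.neighborSet v ∩ A).Subsingleton := by
  rintro a ⟨hva, ha⟩ b ⟨hvb, hb⟩
  by_contra hab
  obtain ⟨p, hp⟩ := (hA ⟨a, ha⟩ ⟨b, hb⟩).exists_isPath
  let ι : G.induce A ↪g G := SimpleGraph.Embedding.induce A
  have hba : b ∉ (hva : G.Adj v a).symm.toWalk.support := by
    simpa [eq_comm, hab] using (hvb : G.Adj v b).ne
  have hvp : v ∈ (p.map ι.toHom).support :=
    hG.mem_support_of_ne_mem_support_of_adj_of_isPath (hp.map ι.injective)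
      (SimpleGraph.Walk.IsPath.of_adj _) hvb.symm hba
  rw [SimpleGraph.Walk.support_map, List.mem_map] at hvp
  obtain ⟨x, -, rfl⟩ := hvp
  exact hv x.2

end Connectivity

section StrongSeparator

variable {V : Type*}

/-- A strong separator: a set `S` such that every component of `G - S` is a tree receiving at most
one edge from each vertex of `S`. These are the sets on which one chip per vertex suffices for the
firing argument. Both conditions are encoded at once by asking that no vertex outside a connected
set avoiding `S` has two neighbours in it. -/
def IsStrongSeparator (G : SimpleGraph V) (S : Set V) : Prop :=
  ∀ ⦃A : Set V⦄, Disjoint S A → (G.induce A).Preconnected →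
    ∀ ⦃v⦄, v ∉ A → (G.neighborSet v ∩ A).Subsingleton

variable {ι : Type*} {G : SimpleGraph V} {T : ι → G.Subgraph} {S : Set V}

theorem adj_of_mem_verts_of_notMem (hverts : ∀ i j, i ≠ j → (T i).verts ∩ (T j).verts ⊆ S)
    (hedges : ⋃ i, (T i).edgeSet = G.edgeSet) {i : ι} {x y : V} (hx : x ∈ (T i).verts)
    (hxS : x ∉ S) (hxy : G.Adj x y) : (T i).Adj x y := by
  obtain ⟨j, hj⟩ := Set.mem_iUnion.1 (hedges.ge (G.mem_edgeSet.2 hxy))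
  rw [SimpleGraph.Subgraph.mem_edgeSet] at hj
  obtain rfl | hij := eq_or_ne i j
  · exact hj
  · exact absurd (hverts i j hij ⟨hx, hj.fst_mem⟩) hxS

theorem subset_verts_of_preconnected (hverts : ∀ i j, i ≠ j → (T i).verts ∩ (T j).verts ⊆ S)
    (hedges : ⋃ i, (T i).edgeSet = G.edgeSet) {A : Set V} (hSA : Disjoint S A)
    (hA : (G.induce A).Preconnected) {i : ι} {a : V} (ha : a ∈ A) (hai : a ∈ (T i).verts) :
    A ⊆ (T i).verts := by
  intro x hx
  by_contra hxi
  obtain ⟨p⟩ := hA ⟨a, ha⟩ ⟨x, hx⟩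
  obtain ⟨d, -, hd, hd'⟩ := p.exists_boundary_dart (Subtype.val ⁻¹' (T i).verts) hai hxi
  exact hd' (adj_of_mem_verts_of_notMem hverts hedges hd
    (Set.disjoint_right.1 hSA d.fst.2) d.adj).snd_mem

theorem isStrongSeparator_of_acyclic_decomposition (hacyclic : ∀ i, (T i).coe.IsAcyclic)
    (hverts : ∀ i j, i ≠ j → (T i).verts ∩ (T j).verts ⊆ S)
    (hedges : ⋃ i, (T i).edgeSet = G.edgeSet) : IsStrongSeparator G S := by
  rintro A hSA hA v hv a ⟨hva, ha⟩ b ⟨hvb, hb⟩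
  obtain ⟨i, hi⟩ := Set.mem_iUnion.1 (hedges.ge (G.mem_edgeSet.2 hva))
  have hAi : A ⊆ (T i).verts :=
    subset_verts_of_preconnected hverts hedges hSA hA ha (T i |>.mem_verts_of_mem_edge hi (by simp))
  have hadj {x y : V} (hx : x ∈ A) (hxy : G.Adj x y) : (T i).Adj x y :=
    adj_of_mem_verts_of_notMem hverts hedges (hAi hx) (Set.disjoint_right.1 hSA hx) hxy
  let f : G.induce A →g (T i).coe.induce (Subtype.val ⁻¹' A) :=
    ⟨fun x => ⟨⟨x, hAi x.2⟩, x.2⟩, fun {x _} h => hadj x.2 h⟩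
  have hAT : ((T i).coe.induce (Subtype.val ⁻¹' A)).Preconnected :=
    hA.map f fun ⟨⟨x, _⟩, hx⟩ => ⟨⟨x, hx⟩, rfl⟩
  have hab := subsingleton_neighborSet_inter_of_isAcyclic (hacyclic i) hAT
    (v := ⟨v, (hadj ha hva.symm).snd_mem⟩) hv
    (x := ⟨a, hAi ha⟩) ⟨(hadj ha hva.symm).symm, ha⟩
    (y := ⟨b, hAi hb⟩) ⟨(hadj hb hvb.symm).symm, hb⟩
  exact congrArg Subtype.val hab

end StrongSeparator

section ChipFiring

variable {V : Type*} [Fintype V] {G : SimpleGraph V} {A S K : Set V} {D E : V → ℤ} {v w : V}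

theorem graphLaplacian_zero : graphLaplacian G 0 = 0 := by
  ext
  simp [graphLaplacian]

theorem graphLaplacian_add (f g : V → ℤ) :
    graphLaplacian G (f + g) = graphLaplacian G f + graphLaplacian G g := by
  ext
  simp only [graphLaplacian, Pi.add_apply, ← Finset.sum_add_distrib]
  refine Finset.sum_congr rfl fun w _ => ?_
  split_ifs <;> ring

theorem LinEquiv.refl (D : V → ℤ) : LinEquiv G D D :=
  ⟨0, by rw [graphLaplacian_zero, add_zero]⟩

theorem LinEquiv.trans {D' D'' : V → ℤ} (h : LinEquiv G D D') (h' : LinEquiv G D' D'') :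
    LinEquiv G D D'' := by
  obtain ⟨f, rfl⟩ := h
  obtain ⟨g, rfl⟩ := h'
  exact ⟨f + g, by rw [graphLaplacian_add, add_assoc]⟩

theorem LinEquiv.sub_right {D' : V → ℤ} (h : LinEquiv G D D') (E : V → ℤ) :
    LinEquiv G (D - E) (D' - E) := by
  obtain ⟨f, rfl⟩ := h
  exact ⟨f, by abel⟩

theorem graphLaplacian_indicator_of_mem (hv : v ∈ A) :
    graphLaplacian G (A.indicator 1) v = (G.neighborSet v \ A).ncard := by
  classical
  rw [Set.ncard_eq_toFinset_card', ← Set.filter_mem_univ_eq_toFinset,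
    Finset.natCast_card_filter]
  refine Finset.sum_congr rfl fun w _ => ?_
  by_cases hw : w ∈ A <;> simp [hv, hw]

theorem graphLaplacian_indicator_of_notMem (hv : v ∉ A) :
    graphLaplacian G (A.indicator 1) v = -(G.neighborSet v ∩ A).ncard := by
  classical
  rw [Set.ncard_eq_toFinset_card', ← Set.filter_mem_univ_eq_toFinset,
    Finset.natCast_card_filter, ← Finset.sum_neg_distrib]
  refine Finset.sum_congr rfl fun w _ => ?_
  by_cases hw : w ∈ A <;> simp [hv, hw, neg_ite]

theorem effective_add_graphLaplacian_indicator (hE : Effective E)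
    (hA : ∀ v ∉ A, (G.neighborSet v ∩ A).ncard ≤ E v) :
    Effective (E + graphLaplacian G (A.indicator 1)) := by
  intro v
  rw [Pi.add_apply]
  by_cases hv : v ∈ A
  · rw [graphLaplacian_indicator_of_mem hv]
    exact add_nonneg (hE v) (Int.natCast_nonneg _)
  · rw [graphLaplacian_indicator_of_notMem hv]
    linarith [hA v hv]

theorem one_le_add_graphLaplacian_indicator (hE : Effective E) (hv : v ∈ A) (hw : w ∉ A)
    (hvw : G.Adj v w) : 1 ≤ (E + graphLaplacian G (A.indicator 1)) v := by
  have hpos : (0 : ℤ) < (G.neighborSet v \ A).ncard :=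
    mod_cast (Set.ncard_pos).2 ⟨w, hvw, hw⟩
  rw [Pi.add_apply, graphLaplacian_indicator_of_mem hv]
  have := hE v
  lia

theorem IsStrongSeparator.effective_add_graphLaplacian_indicator (hS : IsStrongSeparator G S)
    (hSA : Disjoint S A) (hA : (G.induce A).Preconnected) (hE : Effective E)
    (hEA : ∀ v ∉ A, ∀ a ∈ A, G.Adj v a → 1 ≤ E v) :
    Effective (E + graphLaplacian G (A.indicator 1)) := by
  refine _root_.effective_add_graphLaplacian_indicator hE fun v hv => ?_
  obtain hempty | ⟨a, hva, ha⟩ := (G.neighborSet v ∩ A).eq_empty_or_nonempty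
  · simpa [hempty] using hE v
  · have hcard : (G.neighborSet v ∩ A).ncard ≤ 1 :=
      Set.ncard_le_one_iff_subsingleton.2 (hS hSA hA hv)
    exact (Nat.cast_le_one.2 hcard).trans (hEA v hv a ha hva)

theorem IsStrongSeparator.exists_linEquiv_effective_one_le_of_componentComplMk
    (hS : IsStrongSeparator G S) (hreach : ∃ s ∈ S, G.Reachable w s) (hSK : S ⊆ K) (hw : w ∉ K)
    (hE : Effective E)
    (hK : ∀ v ∈ K, ∀ a ∈ G.componentComplMk hw, G.Adj v a → 1 ≤ E v) :
    ∃ E', LinEquiv G E E' ∧ Effective E' ∧ 1 ≤ E' w := by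
  induction K using WellFoundedGT.induction generalizing E with
  | _ K ih
  set C := G.componentComplMk hw
  have hwC : w ∈ C := G.componentComplMk_mem hw
  have hSC : Disjoint S C := C.disjoint_right.mono_left hSK
  set F := E + graphLaplacian G ((C : Set V).indicator 1)
  have hEF : LinEquiv G E F := ⟨_, rfl⟩
  have hF : Effective F :=
    hS.effective_add_graphLaplacian_indicator hSC (connected_coeGraph C).preconnected hE
      fun v hv a ha hva =>
        hK v (by_contra fun hvK => hv (C.mem_of_adj a v ha hvK hva.symm)) a ha hva
  have hboundary {a v : V} (ha : a ∈ C) (hv : v ∉ C) (hav : G.Adj a v) : 1 ≤ F a :=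
    one_le_add_graphLaplacian_indicator hE ha hv hav
  by_cases hFw : 1 ≤ F w
  · exact ⟨F, hEF, hF, hFw⟩
  set K' : Set V := {v | v ∈ C → 1 ≤ F v}
  have hKK' : K ⊆ K' := fun v hv hvC => absurd hv (C.notMem_of_mem hvC)
  have hwK' : w ∉ K' := fun h => hFw (h hwC)
  have hlt : K < K' := by
    obtain ⟨s, hs, ⟨p⟩⟩ := hreach
    obtain ⟨d, -, hd, hd'⟩ := p.exists_boundary_dart C hwC (Set.disjoint_left.1 hSC hs)
    exact hKK'.ssubset_of_mem_notMem (fun _ => hboundary hd hd' d.adj) (C.notMem_of_mem hd)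
  obtain ⟨E', hFE', hE'⟩ := ih K' hlt (hSK.trans hKK') hwK' hF fun v hv a ha hva => by
    obtain ⟨haC, hFa⟩ := Classical.not_imp.1 (SimpleGraph.ComponentCompl.notMem_of_mem ha)
    exact hv (by_contra fun hvC => hFa (hboundary haC hvC hva.symm))
  exact ⟨E', hEF.trans hFE', hE'⟩

theorem IsStrongSeparator.exists_linEquiv_effective_one_le (hS : IsStrongSeparator G S)
    (hreach : ∃ s ∈ S, G.Reachable w s) (hD : Effective D) (hDS : ∀ s ∈ S, 1 ≤ D s) :
    ∃ D', LinEquiv G D D' ∧ Effective D' ∧ 1 ≤ D' w := by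
  by_cases hw : w ∈ S
  · exact ⟨D, .refl D, hD, hDS w hw⟩
  · exact hS.exists_linEquiv_effective_one_le_of_componentComplMk hreach subset_rfl hw hD
      fun s hs _ _ _ => hDS s hs

end ChipFiring

section Rank

variable {V : Type*} [Fintype V] {G : SimpleGraph V} {D E : V → ℤ} {S : Set V}

theorem Effective.exists_eq_single [DecidableEq V] (hE : Effective E) (hdeg : divDeg E = 1) :
    ∃ w, E = Pi.single w 1 := by
  obtain ⟨w, -, hw⟩ := Finset.exists_ne_zero_of_sum_ne_zero (hdeg.trans_ne one_ne_zero)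
  have hnonneg : 0 ≤ E - Pi.single w 1 := fun v => by
    obtain rfl | hv := eq_or_ne v w
    · simpa using Int.add_one_le_iff.2 ((hE v).lt_of_ne' hw)
    · simpa [hv] using hE v
  have hsum : ∑ v, (E - Pi.single w (1 : ℤ) : V → ℤ) v = 0 := by
    simpa [sub_eq_zero, divDeg] using hdeg
  exact ⟨w, sub_eq_zero.1 ((Fintype.sum_eq_zero_iff_of_nonneg hnonneg).1 hsum)⟩

theorem rankGe_one_of_forall_linEquiv
    (h : ∀ w, ∃ D', LinEquiv G D D' ∧ Effective D' ∧ 1 ≤ D' w) : RankGe G D 1 := by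
  classical
  intro E hE hdeg
  obtain ⟨w, rfl⟩ := hE.exists_eq_single (by simpa using hdeg)
  obtain ⟨D', hDD', hD', hw⟩ := h w
  refine ⟨D' - Pi.single w 1, hDD'.sub_right _, fun v => ?_⟩
  obtain rfl | hv := eq_or_ne v w
  · simpa using hw
  · simpa [hv] using hD' v

theorem IsStrongSeparator.rankGe_one (hS : IsStrongSeparator G S)
    (hreach : ∀ w, ∃ s ∈ S, G.Reachable w s) (hD : Effective D) (hDS : ∀ s ∈ S, 1 ≤ D s) :
    RankGe G D 1 :=
  rankGe_one_of_forall_linEquiv fun w =>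
    hS.exists_linEquiv_effective_one_le (hreach w) hD hDS

end Rank

open scoped Classical in
theorem rank_ge_one_tree_decomposed_general {W ι : Type*} [Fintype W] (G : SimpleGraph W)
    (T : ι → G.Subgraph) (S : Set W) (hreach : ∀ w, ∃ s ∈ S, G.Reachable w s)
    (hacyclic : ∀ i, (T i).coe.IsAcyclic)
    (hverts : ∀ i j, i ≠ j → (T i).verts ∩ (T j).verts ⊆ S)
    (hedges : ⋃ i, (T i).edgeSet = G.edgeSet) :
    RankGe G (fun v => if v ∈ S then 1 else 0) 1 :=
  (isStrongSeparator_of_acyclic_decomposition hacyclic hverts hedges).rankGe_one hreach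
    (fun v => by split_ifs <;> simp) fun s hs => by simp [hs]

open scoped Classical in
theorem rank_ge_one_tree_decomposed {W : Type*} [Fintype W] (G : SimpleGraph W)
    (hG : G.Connected) (T : Fin 3 → G.Subgraph) (S : Set W) (n : ℕ) (hn : 3 ≤ n)
    (hS : S.ncard = n)
    (htree : ∀ i, ((T i).coe).IsTree)
    (hverts : ∀ i j, i ≠ j → (T i).verts ∩ (T j).verts = S)
    (hedges : ∀ i j, i ≠ j → Disjoint (T i).edgeSet (T j).edgeSet)
    (hecup : (⋃ i, (T i).edgeSet) = G.edgeSet)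
    (hvcup : (⋃ i, (T i).verts) = Set.univ) :
    RankGe G (fun v => if v ∈ S then 1 else 0) 1 := by
  obtain ⟨s, hs⟩ : S.Nonempty := Set.nonempty_of_ncard_ne_zero (by lia)
  exact rank_ge_one_tree_decomposed_general G T S (fun w => ⟨s, hs, hG.preconnected w s⟩)
    (fun i => (htree i).isAcyclic) (fun i j hij => (hverts i j hij).le) hecup
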